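/- arXiv:1402.4163 — 2 statements merged into one kernel-verified Lean document; each statement's English description precedes it below -/
import Mathlib

section
/- Let φ : ℝ → ℝ be convex with φ(0) = 0. Then inf_{λ ∈ [0,1]} φ(λ) ≤ sup_{f ∈ AC₀} J(f); that is, there exist functions f ∈ AC₀ (in fact linear ones f(t) = ct) for which min_{t ∈ [0,1]} f(t) − ∫_0^1 Λ*(f′(u)) du comes arbitrarily close to (indeed attains) inf_{λ ∈ [0,1]} φ(λ). -/
open MeasureTheory

/-- The Legendre transform `Λ*(x) = sup_{λ ∈ ℝ} (λ x - φ(λ))`, with values in `[0, +∞]`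
(note that the supremum is nonnegative since `φ 0 = 0`). -/
noncomputable def legendreTransform (φ : ℝ → ℝ) (x : ℝ) : ENNReal :=
  ⨆ l : ℝ, ENNReal.ofReal (l * x - φ l)

/-- For `f ∈ AC₀` represented by an integrable `g` on `[0,1]` via `f t = ∫_0^t g`,
this is `I(f) = ∫_0^1 Λ*(g(u)) du ∈ [0, +∞]`. -/
noncomputable def rateACZero (φ : ℝ → ℝ) (g : ℝ → ℝ) : ENNReal :=
  ∫⁻ u in Set.Icc (0:ℝ) 1, legendreTransform φ (g u)

/-- `J(f) = min_{t ∈ [0,1]} f(t) - I(f) ∈ [-∞, +∞)`, with `J(f) = -∞` when `I(f) = +∞`,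
for `f ∈ AC₀` given by `f t = ∫_0^t g`. -/
noncomputable def JACZero (φ : ℝ → ℝ) (g : ℝ → ℝ) : EReal :=
  ((sInf ((fun t => ∫ u in (0:ℝ)..t, g u) '' Set.Icc (0:ℝ) 1) : ℝ) : EReal) -
    (rateACZero φ g : EReal)

/-!
Let `a` minimise `φ` over `[0,1]`. Separating the strict epigraph of `φ` from `[0,1] × (-∞, φ a]`
gives a subgradient `c` of `φ` at `a` for which `a` also minimises `t ↦ t c` over `[0,1]`. For the
linear function `f t = t c` we then have `min f = a c`, while Fenchel's equality gives
`I(f) = Λ*(c) = a c - φ a`, so `J(f) = φ a`.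
-/

theorem isOpen_strict_epigraph {X β : Type*} [TopologicalSpace X] [TopologicalSpace β]
    [LinearOrder β] [OrderClosedTopology β] {f : X → β} {s : Set X} (hs : IsOpen s)
    (hf : ContinuousOn f s) : IsOpen {p : X × β | p.1 ∈ s ∧ f p.1 < p.2} := by
  have hpair : ContinuousOn (fun p : X × β => (f p.1, p.2)) (Prod.fst ⁻¹' s) :=
    (hf.comp continuousOn_fst (Set.mapsTo_preimage _ _)).prodMk continuousOn_snd
  exact hpair.isOpen_inter_preimage (hs.preimage continuous_fst)
    (isOpen_lt continuous_fst continuous_snd)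

theorem exists_subgradient_isMinOn {E : Type*} [AddCommGroup E] [Module ℝ E]
    [TopologicalSpace E] [IsTopologicalAddGroup E] [ContinuousSMul ℝ E]
    {f : E → ℝ} {s t : Set E} {a : E} (hf : ConvexOn ℝ s f) (hs : IsOpen s)
    (hcont : ContinuousOn f s) (ht : Convex ℝ t) (has : a ∈ s) (hat : a ∈ t)
    (hmin : IsMinOn f (s ∩ t) a) :
    ∃ g : E →L[ℝ] ℝ, (∀ x ∈ s, f a + g (x - a) ≤ f x) ∧ IsMinOn g t a := by
  have hdisj : Disjoint {p : E × ℝ | p.1 ∈ s ∧ f p.1 < p.2} (t ×ˢ Set.Iic (f a)) :=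
    Set.disjoint_left.2 fun p hp hpt => (hp.2.trans_le hpt.2).not_ge (hmin ⟨hp.1, hpt.1⟩)
  obtain ⟨F, u, hFlt, hFge⟩ := geometric_hahn_banach_open hf.convex_strict_epigraph
    (isOpen_strict_epigraph hs hcont) (ht.prod (convex_Iic (f a))) hdisj
  set L : E →L[ℝ] ℝ := F.comp (.inl ℝ E ℝ)
  set m : ℝ := F (0, 1)
  have hF (x : E) (r : ℝ) : F (x, r) = L x + r * m := by
    calc F (x, r) = F ((x, 0) + r • (0, 1)) := by simp
      _ = L x + r * m := by rw [map_add, map_smul]; rfl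
  have hge {x : E} (hx : x ∈ t) : u ≤ L x + f a * m :=
    hF x _ ▸ hFge (x, f a) ⟨hx, Set.self_mem_Iic⟩
  have hlt {x : E} (hx : x ∈ s) {r : ℝ} (hr : f x < r) : L x + r * m < u :=
    hF x _ ▸ hFlt (x, r) ⟨hx, hr⟩
  -- The hyperplane separates `(a, f a)` from `(a, f a + 1)`, so it is not vertical.
  have hm : m < 0 := by linarith [hlt has (lt_add_one (f a)), hge hat]
  have hle {x : E} (hx : x ∈ s) : L x + f x * m ≤ u := by
    have hlim : Filter.Tendsto (fun r => L x + r * m) (nhdsWithin (f x) (Set.Ioi (f x)))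
        (nhds (L x + f x * m)) :=
      (Continuous.tendsto (by fun_prop) (f x)).mono_left nhdsWithin_le_nhds
    exact le_of_tendsto hlim (eventually_mem_nhdsWithin.mono fun r hr => (hlt hx hr).le)
  refine ⟨(-m)⁻¹ • L, fun x hx => ?_, fun x hx => ?_⟩
  · have hL : L (x - a) ≤ -m * (f x - f a) := by
      rw [map_sub]
      linarith [hle hx, hge hat]
    exact le_sub_iff_add_le'.1 ((inv_mul_le_iff₀ (neg_pos.2 hm)).2 hL)
  · have hL : L a ≤ L x := by linarith [hle has, hge hx]
    exact mul_le_mul_of_nonneg_left hL (inv_nonneg.2 (neg_pos.2 hm).le)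

theorem legendreTransform_eq_of_subgradient {φ : ℝ → ℝ} {a c : ℝ}
    (hc : ∀ x, φ a + (x - a) * c ≤ φ x) :
    legendreTransform φ c = ENNReal.ofReal (a * c - φ a) := by
  refine le_antisymm (iSup_le fun l => ENNReal.ofReal_le_ofReal ?_)
    (le_iSup (fun l => ENNReal.ofReal (l * c - φ l)) a)
  linarith [hc l]

theorem rateACZero_const (φ : ℝ → ℝ) (c : ℝ) :
    rateACZero φ (fun _ => c) = legendreTransform φ c := by
  simp [rateACZero]

theorem JACZero_const_of_isMinOn (φ : ℝ → ℝ) {a c : ℝ} (ha : a ∈ Set.Icc (0 : ℝ) 1)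
    (hmin : IsMinOn (fun t => t * c) (Set.Icc 0 1) a) :
    JACZero φ (fun _ => c) = ((a * c : ℝ) : EReal) - legendreTransform φ c := by
  have hleast : IsLeast ((fun t => t * c) '' Set.Icc 0 1) (a * c) :=
    ⟨Set.mem_image_of_mem _ ha, Set.forall_mem_image.2 hmin⟩
  simp only [JACZero, rateACZero_const, intervalIntegral.integral_const, sub_zero, smul_eq_mul,
    hleast.csInf_eq]

theorem JACZero_const_of_subgradient {φ : ℝ → ℝ} {a c : ℝ} (h0 : φ 0 ≤ 0)
    (ha : a ∈ Set.Icc (0 : ℝ) 1) (hc : ∀ x, φ a + (x - a) * c ≤ φ x)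
    (hmin : IsMinOn (fun t => t * c) (Set.Icc 0 1) a) :
    JACZero φ (fun _ => c) = φ a := by
  have hnonneg : 0 ≤ a * c - φ a := by linarith [hc 0]
  rw [JACZero_const_of_isMinOn φ ha hmin, legendreTransform_eq_of_subgradient hc,
    EReal.coe_ennreal_ofReal, max_eq_left hnonneg, ← EReal.coe_sub, sub_sub_cancel]

theorem inf_phi_le_sup_J_general (φ : ℝ → ℝ) (hconv : ConvexOn ℝ Set.univ φ) (h0 : φ 0 ≤ 0) :
    ∃ c : ℝ, JACZero φ (fun _ => c) = (⨅ l : Set.Icc (0 : ℝ) 1, φ l : ℝ) := by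
  have hcont : ContinuousOn φ Set.univ := hconv.continuousOn isOpen_univ
  obtain ⟨a, ha, hmin⟩ := isCompact_Icc.exists_isMinOn (Set.nonempty_Icc.2 zero_le_one)
    (hcont.mono (Set.subset_univ (Set.Icc 0 1)))
  obtain ⟨g, hsub, hgmin⟩ := exists_subgradient_isMinOn hconv isOpen_univ hcont
    (convex_Icc 0 1) (Set.mem_univ a) ha (by rwa [Set.univ_inter])
  have hg (x : ℝ) : g x = x * g 1 := by
    rw [← smul_eq_mul, ← map_smul, smul_eq_mul, mul_one]
  refine ⟨g 1, ?_⟩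
  rw [hmin.iInf_eq ha]
  exact JACZero_const_of_subgradient h0 ha (fun x => hg (x - a) ▸ hsub x (Set.mem_univ x))
    (funext hg ▸ hgmin)

/-- For `φ : ℝ → ℝ` convex with `φ(0) = 0`,
`sup_{f ∈ AC₀} J(f) = inf_{λ ∈ [0,1]} φ(λ)`. -/
theorem inf_phi_le_sup_J (φ : ℝ → ℝ)
    (hconv : ConvexOn ℝ Set.univ φ) (h0 : φ 0 = 0) :
    ((⨅ l : Set.Icc (0:ℝ) 1, φ l : ℝ) : EReal) ≤
      ⨆ (g : ℝ → ℝ) (_ : IntegrableOn g (Set.Icc (0:ℝ) 1)), JACZero φ g := by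
  obtain ⟨c, hc⟩ := inf_phi_le_sup_J_general φ hconv h0.le
  exact hc.ge.trans (le_iSup₂_of_le (fun _ => c) (by simp) le_rfl)
end

section
/- Let φ : ℝ → ℝ be convex with φ(0) = 0. Then for every f ∈ AC₀ and every t* ∈ [0,1] one has J(f) ≤ φ(t*); consequently sup_{f ∈ AC₀} J(f) ≤ inf_{λ ∈ [0,1]} φ(λ). -/
open MeasureTheory

/-!
Jensen's inequality for `Λ*` gives `Λ*(f 1) ≤ I(f)`, and the Fenchel–Young inequality gives
`t * f 1 ≤ φ t + Λ*(f 1)`. As `f 0 = 0`, the left side is the convex combination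
`(1 - t) * f 0 + t * f 1` of two values of `f`, hence at least `min f`, so `min f ≤ φ t + I(f)`.
-/

theorem ofReal_integral_le_lintegral_ofReal {α : Type*} [MeasurableSpace α] {μ : Measure α}
    {f : α → ℝ} (hf : Integrable f μ) :
    ENNReal.ofReal (∫ x, f x ∂μ) ≤ ∫⁻ x, ENNReal.ofReal (f x) ∂μ := by
  rw [integral_eq_lintegral_pos_part_sub_lintegral_neg_part hf]
  exact (ENNReal.ofReal_le_ofReal (sub_le_self _ ENNReal.toReal_nonneg)).trans
    ENNReal.ofReal_toReal_le

/-- Equality fails for `f` unbounded below: then the left side is `⊥`, while the real infimum takes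
its junk value `0`. -/
theorem iInf_coe_ereal_le_coe_iInf {ι : Sort*} [Nonempty ι] (f : ι → ℝ) :
    ⨅ i, (f i : EReal) ≤ ((⨅ i, f i : ℝ) : EReal) := by
  refine EReal.ge_of_forall_gt_iff_ge.mp fun z hz => EReal.coe_le_coe ?_
  exact le_ciInf fun i => EReal.coe_le_coe_iff.mp (hz.le.trans (iInf_le _ i))

section Primitive

variable {μ : Measure ℝ} [NullSingletonClass μ] {g : ℝ → ℝ} {a b t : ℝ}

theorem sInf_image_primitive_le (hg : IntegrableOn g (Set.Icc a b) μ) (ht : t ∈ Set.Icc a b) :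
    sInf ((fun s => ∫ u in a..s, g u ∂μ) '' Set.Icc a b) ≤ ∫ u in a..t, g u ∂μ := by
  have huIcc : Set.uIcc a b = Set.Icc a b := Set.uIcc_of_le (ht.1.trans ht.2)
  have hcont : ContinuousOn (fun s => ∫ u in a..s, g u ∂μ) (Set.Icc a b) :=
    huIcc ▸ intervalIntegral.continuousOn_primitive_interval (huIcc ▸ hg)
  exact hcont.sInf_image_Icc_le ht

theorem sInf_image_primitive_le_mul (hab : a ≤ b) (hg : IntegrableOn g (Set.Icc a b) μ)
    (ht : t ∈ Set.Icc (0 : ℝ) 1) :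
    sInf ((fun s => ∫ u in a..s, g u ∂μ) '' Set.Icc a b) ≤ t * ∫ u in a..b, g u ∂μ := by
  have hleft := sInf_image_primitive_le hg (Set.left_mem_Icc.mpr hab)
  have hright := sInf_image_primitive_le hg (Set.right_mem_Icc.mpr hab)
  rw [intervalIntegral.integral_same] at hleft
  calc
    _ ≤ min 0 (∫ u in a..b, g u ∂μ) := le_min hleft hright
    _ ≤ (1 - t) • 0 + t • ∫ u in a..b, g u ∂μ :=
      Convex.min_le_combo _ _ (sub_nonneg.mpr ht.2) ht.1 (sub_add_cancel 1 t)
    _ = t * ∫ u in a..b, g u ∂μ := by simp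

end Primitive

theorem ofReal_mul_sub_le_legendreTransform (φ : ℝ → ℝ) (l x : ℝ) :
    ENNReal.ofReal (l * x - φ l) ≤ legendreTransform φ x :=
  le_iSup (fun l => ENNReal.ofReal (l * x - φ l)) l

theorem coe_mul_le_coe_add_legendreTransform (φ : ℝ → ℝ) (l x : ℝ) :
    ((l * x : ℝ) : EReal) ≤ (φ l : EReal) + (legendreTransform φ x : EReal) := by
  have hsub : ((l * x - φ l : ℝ) : EReal) ≤ (legendreTransform φ x : EReal) := by
    calc
      ((l * x - φ l : ℝ) : EReal) ≤ (ENNReal.ofReal (l * x - φ l) : EReal) :=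
        EReal.coe_ennreal_ofReal ▸ EReal.coe_le_coe (le_max_left _ _)
      _ ≤ (legendreTransform φ x : EReal) :=
        EReal.coe_ennreal_le_coe_ennreal_iff.mpr (ofReal_mul_sub_le_legendreTransform φ l x)
  calc
    ((l * x : ℝ) : EReal) = (φ l : EReal) + ((l * x - φ l : ℝ) : EReal) := by
      rw [← EReal.coe_add, add_sub_cancel]
    _ ≤ (φ l : EReal) + (legendreTransform φ x : EReal) := by gcongr

theorem legendreTransform_integral_le_lintegral {α : Type*} [MeasurableSpace α] {μ : Measure α}
    [IsProbabilityMeasure μ] (φ : ℝ → ℝ) {g : α → ℝ} (hg : Integrable g μ) :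
    legendreTransform φ (∫ x, g x ∂μ) ≤ ∫⁻ x, legendreTransform φ (g x) ∂μ := by
  refine iSup_le fun l => ?_
  have hint : ∫ x, (l * g x - φ l) ∂μ = l * ∫ x, g x ∂μ - φ l := by
    rw [integral_sub (hg.const_mul l) (integrable_const _), integral_const_mul]
    simp
  calc
    ENNReal.ofReal (l * ∫ x, g x ∂μ - φ l) = ENNReal.ofReal (∫ x, (l * g x - φ l) ∂μ) := by
      rw [hint]
    _ ≤ ∫⁻ x, ENNReal.ofReal (l * g x - φ l) ∂μ :=
      ofReal_integral_le_lintegral_ofReal ((hg.const_mul l).sub (integrable_const _))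
    _ ≤ ∫⁻ x, legendreTransform φ (g x) ∂μ :=
      lintegral_mono fun x => ofReal_mul_sub_le_legendreTransform φ l (g x)

theorem legendreTransform_intervalIntegral_le_rateACZero (φ : ℝ → ℝ) {g : ℝ → ℝ}
    (hg : IntegrableOn g (Set.Icc 0 1)) :
    legendreTransform φ (∫ u in (0 : ℝ)..1, g u) ≤ rateACZero φ g := by
  have : IsProbabilityMeasure (volume.restrict (Set.Icc (0 : ℝ) 1)) := ⟨by simp⟩
  rw [intervalIntegral.integral_of_le zero_le_one, ← integral_Icc_eq_integral_Ioc]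
  exact legendreTransform_integral_le_lintegral φ hg

theorem JACZero_le (φ : ℝ → ℝ) {g : ℝ → ℝ} (hg : IntegrableOn g (Set.Icc 0 1)) {t : ℝ}
    (ht : t ∈ Set.Icc (0 : ℝ) 1) : JACZero φ g ≤ (φ t : EReal) := by
  refine EReal.sub_le_of_le_add ?_
  calc
    ((sInf ((fun s => ∫ u in (0 : ℝ)..s, g u) '' Set.Icc 0 1) : ℝ) : EReal)
      ≤ ((t * ∫ u in (0 : ℝ)..1, g u : ℝ) : EReal) :=
        EReal.coe_le_coe (sInf_image_primitive_le_mul zero_le_one hg ht)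
    _ ≤ (φ t : EReal) + (legendreTransform φ (∫ u in (0 : ℝ)..1, g u) : EReal) :=
        coe_mul_le_coe_add_legendreTransform φ t _
    _ ≤ (φ t : EReal) + (rateACZero φ g : EReal) := by
        gcongr
        exact EReal.coe_ennreal_le_coe_ennreal_iff.mpr <|
          legendreTransform_intervalIntegral_le_rateACZero φ hg

theorem J_le_phi_and_sup_J_le_inf_phi_general (φ : ℝ → ℝ) :
    (∀ g : ℝ → ℝ, IntegrableOn g (Set.Icc (0:ℝ) 1) →
      ∀ t ∈ Set.Icc (0:ℝ) 1, JACZero φ g ≤ (φ t : EReal)) ∧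
    (⨆ (g : ℝ → ℝ) (_ : IntegrableOn g (Set.Icc (0:ℝ) 1)), JACZero φ g) ≤
      ⨅ l : Set.Icc (0:ℝ) 1, (φ l : EReal) :=
  ⟨fun _ hg _ ht => JACZero_le φ hg ht,
    iSup₂_le fun _ hg => le_iInf fun l => JACZero_le φ hg l.2⟩

/-- For `φ : ℝ → ℝ` convex with `φ(0) = 0`, every `f ∈ AC₀` and `t* ∈ [0,1]` satisfy
`J(f) ≤ φ(t*)`; consequently `sup_{f ∈ AC₀} J(f) ≤ inf_{λ ∈ [0,1]} φ(λ)`. -/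
theorem J_le_phi_and_sup_J_le_inf_phi (φ : ℝ → ℝ)
    (hconv : ConvexOn ℝ Set.univ φ) (h0 : φ 0 = 0) :
    (∀ g : ℝ → ℝ, IntegrableOn g (Set.Icc (0:ℝ) 1) →
      ∀ tstar ∈ Set.Icc (0:ℝ) 1, JACZero φ g ≤ ((φ tstar : ℝ) : EReal)) ∧
    (⨆ (g : ℝ → ℝ) (_ : IntegrableOn g (Set.Icc (0:ℝ) 1)), JACZero φ g) ≤
      ((⨅ l : Set.Icc (0:ℝ) 1, φ l : ℝ) : EReal) := by
  obtain ⟨hJ, hsup⟩ := J_le_phi_and_sup_J_le_inf_phi_general φ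
  exact ⟨hJ, hsup.trans (iInf_coe_ereal_le_coe_iInf _)⟩
end
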